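/- arXiv:2012.12034 — 2 statements merged into one kernel-verified Lean document; each statement's English description precedes it below -/
import Mathlib

section
/- Let S_1, …, S_k be bounded linear operators on H each admitting an A-adjoint, and let n ≥ 1 be an integer. Then ω_A( Σ_{i=1}^k S_i )^{2n} ≤ (k^{2n−1}/√2) · Σ_{i=1}^k ω_A( (S_i^{♯_A} S_i)^{n} + i (S_i S_i^{♯_A})^{n} ). -/
/-!
The operators are bounded for the norm of `H`, which does not by itself bound their quadratic forms
`⟨T x, x⟩_A` on the `A`-unit vectors. The key is that for an `A`-positive operator `P` the moments
`⟨P ^ j x, x⟩_A` form a log-convex sequence. This gives McCarthy's inequality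
`⟨P x, x⟩_A ^ n ≤ ⟨P ^ n x, x⟩_A` for `‖x‖_A = 1` and, by comparing growth rates as `n → ∞`, Reid's
inequality `⟨P x, x⟩_A ≤ ‖P‖ ⟨x, x⟩_A`, which makes the suprema `ω_A` on the right-hand side finite.

If `T` and `X` are `A`-adjoint, then `X T` and `T X` are `A`-positive. For `‖x‖_A = 1`,
Cauchy–Schwarz and McCarthy bound `|⟨T x, x⟩_A| ^ (2 n)` by both `p = ⟨(X T) ^ n x, x⟩_A` and
`q = ⟨(T X) ^ n x, x⟩_A`, hence by `√(p² + q²) / √2`, and `√(p² + q²)` is the modulus of the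
quadratic form of `(X T) ^ n + i (T X) ^ n` at `x`. The power mean inequality passes to sums.
-/

noncomputable section

open ContinuousLinearMap

variable {H : Type*} [NormedAddCommGroup H] [InnerProductSpace ℂ H] [CompleteSpace H]

/-- The semi-inner product induced by the positive operator `A`: `⟨x, y⟩_A := ⟨A x, y⟩`. -/
def innA (A : H →L[ℂ] H) (x y : H) : ℂ := inner ℂ (A x) y

/-- The seminorm induced by `A`: `‖x‖_A := ⟨x, x⟩_A ^ (1/2)`. -/
def vnormA (A : H →L[ℂ] H) (x : H) : ℝ := Real.sqrt (innA A x x).re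

/-- The `A`-operator seminorm: `‖T‖_A := sup {‖T x‖_A : ‖x‖_A = 1}`. -/
def opNormA (A T : H →L[ℂ] H) : ℝ :=
  sSup {c : ℝ | ∃ x : H, vnormA A x = 1 ∧ c = vnormA A (T x)}

/-- The `A`-numerical radius: `ω_A(T) := sup {|⟨T x, x⟩_A| : ‖x‖_A = 1}`. -/
def wA (A T : H →L[ℂ] H) : ℝ :=
  sSup {c : ℝ | ∃ x : H, vnormA A x = 1 ∧ c = ‖innA A (T x) x‖}

/-- `T` admits an `A`-adjoint: there is a bounded operator `X` with `A X = T* A`. -/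
def HasAAdjoint (A T : H →L[ℂ] H) : Prop :=
  ∃ X : H →L[ℂ] H, A ∘L X = adjoint T ∘L A

/-- `X` is the reduced `A`-adjoint `T^{♯_A}` of `T`: it solves `A X = T* A` and its range
is contained in the closure of the range of `A`. -/
def IsReducedAAdjoint (A T X : H →L[ℂ] H) : Prop :=
  (A ∘L X = adjoint T ∘L A) ∧ ∀ y : H, X y ∈ closure (Set.range A)

section LogConvex

variable {R : Type*} [CommRing R] [LinearOrder R] [IsStrictOrderedRing R] {a : ℕ → R}

theorem mul_le_mul_succ_of_sq_le_mul (ha : ∀ j, 0 ≤ a j)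
    (h : ∀ j, a (j + 1) ^ 2 ≤ a j * a (j + 2)) (n : ℕ) : a 1 * a n ≤ a 0 * a (n + 1) := by
  induction n with
  | zero => rw [mul_comm]
  | succ n ih =>
    rcases (ha n).eq_or_lt with hn | hn
    · have : a (n + 1) = 0 := sq_nonpos_iff _ |>.mp (by simpa [← hn] using h n)
      rw [this, mul_zero]
      exact mul_nonneg (ha 0) (ha _)
    · refine le_of_mul_le_mul_left ?_ hn
      calc a n * (a 1 * a (n + 1)) = a 1 * a n * a (n + 1) := by ring
        _ ≤ a 0 * a (n + 1) * a (n + 1) := by gcongr; exact ha _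
        _ = a 0 * a (n + 1) ^ 2 := by ring
        _ ≤ a 0 * (a n * a (n + 2)) := by gcongr; exacts [ha 0, h n]
        _ = a n * (a 0 * a (n + 2)) := by ring

theorem pow_mul_le_pow_mul_of_sq_le_mul (ha : ∀ j, 0 ≤ a j)
    (h : ∀ j, a (j + 1) ^ 2 ≤ a j * a (j + 2)) (n : ℕ) :
    a 1 ^ n * a 0 ≤ a 0 ^ n * a n := by
  induction n with
  | zero => simp
  | succ n ih =>
    calc a 1 ^ (n + 1) * a 0 = a 1 * (a 1 ^ n * a 0) := by ring
      _ ≤ a 1 * (a 0 ^ n * a n) := by gcongr; exact ha 1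
      _ = a 0 ^ n * (a 1 * a n) := by ring
      _ ≤ a 0 ^ n * (a 0 * a (n + 1)) := by
        gcongr ?_ * ?_
        · exact pow_nonneg (ha 0) n
        · exact mul_le_mul_succ_of_sq_le_mul ha h n
      _ = a 0 ^ (n + 1) * a (n + 1) := by ring

end LogConvex

theorem le_of_forall_pow_mul_le_pow_mul {K : Type*} [Field K] [LinearOrder K]
    [IsStrictOrderedRing K] [Archimedean K] {x y c C : K} (hy : 0 ≤ y) (hc : 0 < c)
    (h : ∀ n : ℕ, x ^ n * c ≤ y ^ n * C) : x ≤ y := by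
  by_contra! hlt
  have hx : 0 < x := hy.trans_lt hlt
  have hC : 0 < C := hc.trans_le (by simpa using h 0)
  obtain ⟨n, hn⟩ := exists_pow_lt_of_lt_one (div_pos hc hC) ((div_lt_one hx).mpr hlt)
  rw [div_pow, div_lt_div_iff₀ (by positivity) hC, mul_comm c] at hn
  exact (h n).not_gt hn

theorem norm_pow_apply_le {𝕜 E : Type*} [NontriviallyNormedField 𝕜] [SeminormedAddCommGroup E]
    [NormedSpace 𝕜 E] (P : E →L[𝕜] E) (n : ℕ) (x : E) : ‖(P ^ n) x‖ ≤ ‖P‖ ^ n * ‖x‖ := by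
  induction n with
  | zero => simp
  | succ n ih =>
    calc ‖(P ^ (n + 1)) x‖ = ‖P ((P ^ n) x)‖ := by rw [pow_succ', mul_apply_eq_comp]
      _ ≤ ‖P‖ * (‖P‖ ^ n * ‖x‖) := P.le_opNorm_of_le ih
      _ = ‖P‖ ^ (n + 1) * ‖x‖ := by ring

section SemiInner

omit [CompleteSpace H]

variable {A P Q T X : H →L[ℂ] H} {x : H}

theorem vnormA_eq_one_iff : vnormA A x = 1 ↔ (innA A x x).re = 1 :=
  Real.sqrt_eq_one

theorem innA_sum_left {ι : Type*} (A : H →L[ℂ] H) (s : Finset ι) (f : ι → H) (y : H) :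
    innA A (∑ i ∈ s, f i) y = ∑ i ∈ s, innA A (f i) y := by
  simp only [innA, map_sum, sum_inner]

theorem innA_add_smul_apply (A P Q : H →L[ℂ] H) (c : ℂ) (x y : H) :
    innA A ((P + c • Q) x) y = innA A (P x) y + starRingEnd ℂ c * innA A (Q x) y := by
  simp only [innA, add_apply, smul_apply, map_add, map_smul, inner_add_left, inner_smul_left]

theorem norm_innA_le (A : H →L[ℂ] H) (x y : H) : ‖innA A x y‖ ≤ ‖A‖ * ‖x‖ * ‖y‖ :=
  (norm_inner_le_norm _ _).trans (by gcongr; exact A.le_opNorm x)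

theorem innA_conj_symm (hA : A.IsPositive) (x y : H) :
    starRingEnd ℂ (innA A y x) = innA A x y := by
  rw [innA, inner_conj_symm, ← hA.inner_left_eq_inner_right, innA]

theorem norm_innA_sq_le (hA : A.IsPositive) (x y : H) :
    ‖innA A x y‖ ^ 2 ≤ (innA A x x).re * (innA A y y).re := by
  let core : PreInnerProductSpace.Core ℂ H :=
    { inner := innA A
      conj_inner_symm := innA_conj_symm hA
      re_inner_nonneg := hA.re_inner_nonneg_left
      add_left := fun u v w => by rw [innA, map_add, inner_add_left]; rfl
      smul_left := fun u v c => by rw [innA, map_smul, inner_smul_left]; rfl }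
  have h : ‖innA A x y‖ * ‖innA A y x‖ ≤ (innA A x x).re * (innA A y y).re :=
    @InnerProductSpace.Core.inner_mul_inner_self_le ℂ H _ _ _ core x y
  rwa [← innA_conj_symm hA y x, RCLike.norm_conj, ← sq] at h

/-- `X` is an `A`-adjoint of `T`, i.e. `⟨X x, y⟩_A = ⟨x, T y⟩_A`. This is the equation `A X = T* A`
in a weak form that makes sense in a space that is not complete. -/
def IsAAdjoint (A T X : H →L[ℂ] H) : Prop :=
  ∀ x y, innA A (X x) y = innA A x (T y)

/-- `P` is `A`-positive, i.e. non-negative for `⟨·, ·⟩_A`, encoded as the positivity of `A P`. -/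
def IsAPositive (A P : H →L[ℂ] H) : Prop :=
  (A * P).IsPositive

theorem IsAAdjoint.symm (hA : A.IsPositive) (h : IsAAdjoint A T X) : IsAAdjoint A X T :=
  fun x y => by rw [← innA_conj_symm hA, ← h, innA_conj_symm hA]

theorem IsAAdjoint.norm_innA_apply_self (hA : A.IsPositive) (h : IsAAdjoint A T X) (x : H) :
    ‖innA A (X x) x‖ = ‖innA A (T x) x‖ := by
  rw [h, ← innA_conj_symm hA, RCLike.norm_conj]

namespace IsAPositive

theorem re_innA_nonneg (hP : IsAPositive A P) (x : H) : 0 ≤ (innA A (P x) x).re :=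
  hP.re_inner_nonneg_left x

theorem innA_eq_re (hP : IsAPositive A P) (x : H) :
    innA A (P x) x = ((innA A (P x) x).re : ℂ) :=
  ((isPositive_iff_complex _).mp hP x).1.symm

theorem one (hA : A.IsPositive) : IsAPositive A 1 := by
  rwa [IsAPositive, mul_one]

theorem isAAdjoint_self (hA : A.IsPositive) (hP : IsAPositive A P) : IsAAdjoint A P P :=
  fun x y => (hP.inner_left_eq_inner_right x y).trans (hA.inner_left_eq_inner_right x (P y)).symm

theorem conj (hP : IsAPositive A P) (h : IsAAdjoint A T X) : IsAPositive A (X * P * T) := by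
  refine (isPositive_iff_complex _).mpr fun x => ?_
  have : inner ℂ ((A * (X * P * T)) x) x = inner ℂ ((A * P) (T x)) (T x) := h (P (T x)) x
  rw [this]
  exact (isPositive_iff_complex _).mp hP (T x)

theorem pow (hA : A.IsPositive) (hP : IsAPositive A P) (n : ℕ) : IsAPositive A (P ^ n) := by
  induction n using Nat.twoStepInduction with
  | zero => exact pow_zero P ▸ one hA
  | one => rwa [pow_one]
  | more n ih _ =>
    rw [pow_succ, pow_succ']
    exact ih.conj (hP.isAAdjoint_self hA)

theorem re_innA_pow_succ_sq_le (hA : A.IsPositive) (hP : IsAPositive A P) (x : H) (j : ℕ) :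
    (innA A ((P ^ (j + 1)) x) x).re ^ 2 ≤
      (innA A ((P ^ j) x) x).re * (innA A ((P ^ (j + 2)) x) x).re := by
  have h₁ : innA A ((P ^ (j + 1)) x) x = innA (A * P ^ j) (P x) x := by
    rw [pow_succ]; rfl
  have h₂ : innA A ((P ^ (j + 2)) x) x = innA (A * P ^ j) (P x) (P x) := by
    rw [pow_succ, pow_succ']
    exact hP.isAAdjoint_self hA ((P ^ j) (P x)) x
  calc (innA A ((P ^ (j + 1)) x) x).re ^ 2 ≤ ‖innA A ((P ^ (j + 1)) x) x‖ ^ 2 :=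
        sq_le_sq' (abs_le.mp (Complex.abs_re_le_norm _)).1 (Complex.re_le_norm _)
    _ ≤ (innA A ((P ^ (j + 2)) x) x).re * (innA A ((P ^ j) x) x).re := by
        rw [h₁, h₂]
        exact norm_innA_sq_le (hP.pow hA j) (P x) x
    _ = _ := mul_comm _ _

/-- McCarthy's inequality. -/
theorem re_innA_pow_mul_le (hA : A.IsPositive) (hP : IsAPositive A P) (x : H) (n : ℕ) :
    (innA A (P x) x).re ^ n * (innA A x x).re ≤
      (innA A x x).re ^ n * (innA A ((P ^ n) x) x).re := by
  simpa only [pow_zero, pow_one, one_apply_eq_self] using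
    pow_mul_le_pow_mul_of_sq_le_mul (a := fun j => (innA A ((P ^ j) x) x).re)
      (fun j => (hP.pow hA j).re_innA_nonneg x) (hP.re_innA_pow_succ_sq_le hA x) n

/-- Reid's inequality. -/
theorem re_innA_le (hA : A.IsPositive) (hP : IsAPositive A P) (x : H) :
    (innA A (P x) x).re ≤ ‖P‖ * (innA A x x).re := by
  have hx : 0 ≤ (innA A x x).re := hA.re_inner_nonneg_left x
  rcases hx.eq_or_lt with hx₀ | hx₀
  · have h := norm_innA_sq_le hA (P x) x
    rw [← hx₀, mul_zero, sq_nonpos_iff, norm_eq_zero] at h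
    rw [h, ← hx₀, mul_zero, Complex.zero_re]
  · refine le_of_forall_pow_mul_le_pow_mul (C := ‖A‖ * ‖x‖ ^ 2) (by positivity) hx₀ fun n => ?_
    calc (innA A (P x) x).re ^ n * (innA A x x).re
        ≤ (innA A x x).re ^ n * (innA A ((P ^ n) x) x).re := hP.re_innA_pow_mul_le hA x n
      _ ≤ (innA A x x).re ^ n * (‖A‖ * (‖P‖ ^ n * ‖x‖) * ‖x‖) := by
          gcongr
          refine (Complex.re_le_norm _).trans ((norm_innA_le A _ _).trans ?_)
          gcongr
          exact norm_pow_apply_le P n x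
      _ = (‖P‖ * (innA A x x).re) ^ n * (‖A‖ * ‖x‖ ^ 2) := by ring

theorem norm_innA_add_I_smul_sq (hP : IsAPositive A P) (hQ : IsAPositive A Q) (x : H) :
    ‖innA A ((P + Complex.I • Q) x) x‖ ^ 2 =
      (innA A (P x) x).re ^ 2 + (innA A (Q x) x).re ^ 2 := by
  rw [innA_add_smul_apply, hP.innA_eq_re, hQ.innA_eq_re, Complex.sq_norm, Complex.normSq_apply]
  simp [sq]

end IsAPositive

theorem wA_nonneg (A T : H →L[ℂ] H) : 0 ≤ wA A T := by
  refine Real.sSup_nonneg ?_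
  rintro _ ⟨x, -, rfl⟩
  exact norm_nonneg _

theorem norm_innA_le_wA {C : ℝ} (hC : ∀ y, vnormA A y = 1 → ‖innA A (T y) y‖ ≤ C)
    (hx : vnormA A x = 1) : ‖innA A (T x) x‖ ≤ wA A T := by
  refine le_csSup ⟨C, ?_⟩ ⟨x, hx, rfl⟩
  rintro _ ⟨y, hy, rfl⟩
  exact hC y hy

theorem wA_pow_le {m : ℕ} (hm : m ≠ 0) {R : ℝ} (hR : 0 ≤ R)
    (h : ∀ x, vnormA A x = 1 → ‖innA A (T x) x‖ ^ m ≤ R) : wA A T ^ m ≤ R := by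
  have hroot : wA A T ≤ R ^ (m : ℝ)⁻¹ := by
    refine Real.sSup_le ?_ (by positivity)
    rintro _ ⟨x, hx, rfl⟩
    rw [← Real.pow_rpow_inv_natCast (norm_nonneg (innA A (T x) x)) hm]
    gcongr
    exact h x hx
  calc wA A T ^ m ≤ (R ^ (m : ℝ)⁻¹) ^ m := pow_le_pow_left₀ (wA_nonneg A T) hroot m
    _ = R := Real.rpow_inv_natCast_pow hR hm

theorem IsAPositive.norm_innA_add_smul_le_wA (hA : A.IsPositive) (hP : IsAPositive A P)
    (hQ : IsAPositive A Q) (c : ℂ) (hx : vnormA A x = 1) :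
    ‖innA A ((P + c • Q) x) x‖ ≤ wA A (P + c • Q) := by
  have hbound {R : H →L[ℂ] H} (hR : IsAPositive A R) {y : H} (hy : vnormA A y = 1) :
      ‖innA A (R y) y‖ ≤ ‖R‖ := by
    rw [hR.innA_eq_re, Complex.norm_of_nonneg (hR.re_innA_nonneg y)]
    simpa only [vnormA_eq_one_iff.mp hy, mul_one] using hR.re_innA_le hA y
  refine norm_innA_le_wA (C := ‖P‖ + ‖c‖ * ‖Q‖) (fun y hy => ?_) hx
  rw [innA_add_smul_apply]
  refine (norm_add_le _ _).trans (add_le_add (hbound hP hy) ?_)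
  rw [norm_mul, RCLike.norm_conj]
  gcongr
  exact hbound hQ hy

namespace IsAAdjoint

theorem isAPositive_mul (hA : A.IsPositive) (h : IsAAdjoint A T X) : IsAPositive A (X * T) := by
  simpa only [mul_one] using (IsAPositive.one hA).conj h

theorem norm_innA_pow_le_re_innA_pow (hA : A.IsPositive) (h : IsAAdjoint A T X) (n : ℕ)
    (hx : vnormA A x = 1) :
    ‖innA A (T x) x‖ ^ (2 * n) ≤ (innA A (((X * T) ^ n) x) x).re := by
  have hx₁ : (innA A x x).re = 1 := vnormA_eq_one_iff.mp hx
  have cauchy_schwarz : ‖innA A (T x) x‖ ^ 2 ≤ (innA A ((X * T) x) x).re := by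
    rw [mul_apply_eq_comp, h (T x) x]
    simpa only [hx₁, mul_one] using norm_innA_sq_le hA (T x) x
  have mccarthy := (h.isAPositive_mul hA).re_innA_pow_mul_le hA x n
  rw [hx₁, mul_one, one_pow, one_mul] at mccarthy
  rw [pow_mul]
  exact (pow_le_pow_left₀ (by positivity) cauchy_schwarz n).trans mccarthy

theorem norm_innA_pow_le_wA (hA : A.IsPositive) (h : IsAAdjoint A T X) (n : ℕ)
    (hx : vnormA A x = 1) :
    ‖innA A (T x) x‖ ^ (2 * n) ≤
      wA A ((X * T) ^ n + Complex.I • (T * X) ^ n) / √2 := by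
  have hP := (h.isAPositive_mul hA).pow hA n
  have hQ := ((h.symm hA).isAPositive_mul hA).pow hA n
  have hp := h.norm_innA_pow_le_re_innA_pow hA n hx
  have hq := (h.symm hA).norm_innA_pow_le_re_innA_pow hA n hx
  rw [h.norm_innA_apply_self hA] at hq
  rw [le_div_iff₀ (by positivity)]
  refine le_trans ?_ (hP.norm_innA_add_smul_le_wA hA hQ Complex.I hx)
  refine le_of_sq_le_sq ?_ (norm_nonneg _)
  calc (‖innA A (T x) x‖ ^ (2 * n) * √2) ^ 2
      = (‖innA A (T x) x‖ ^ (2 * n)) ^ 2 + (‖innA A (T x) x‖ ^ (2 * n)) ^ 2 := by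
        rw [mul_pow, Real.sq_sqrt zero_le_two, mul_two]
    _ ≤ (innA A (((X * T) ^ n) x) x).re ^ 2 + (innA A (((T * X) ^ n) x) x).re ^ 2 := by gcongr
    _ = _ := (hP.norm_innA_add_I_smul_sq hQ x).symm

end IsAAdjoint

theorem norm_innA_sum_pow_le {ι : Type*} (A : H →L[ℂ] H) (s : Finset ι) (S : ι → H →L[ℂ] H)
    (x y : H) {m : ℕ} (hm : m ≠ 0) :
    ‖innA A ((∑ i ∈ s, S i) x) y‖ ^ m ≤
      (s.card : ℝ) ^ (m - 1) * ∑ i ∈ s, ‖innA A (S i x) y‖ ^ m := by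
  obtain ⟨m, rfl⟩ := Nat.exists_eq_succ_of_ne_zero hm
  rw [sum_apply, innA_sum_left]
  exact (pow_le_pow_left₀ (norm_nonneg _) (norm_sum_le _ _) _).trans
    (pow_sum_le_card_mul_sum_pow (fun _ _ => norm_nonneg _) m)

theorem stmt15_general {ι : Type*} (s : Finset ι) (hA : A.IsPositive) (_hA0 : A ≠ 0)
    {n : ℕ} (hn : n ≠ 0) (S X : ι → H →L[ℂ] H) (hS : ∀ i ∈ s, IsAAdjoint A (S i) (X i)) :
    wA A (∑ i ∈ s, S i) ^ (2 * n) ≤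
      ((s.card : ℝ) ^ (2 * n - 1) / √2) *
        ∑ i ∈ s, wA A ((X i * S i) ^ n + Complex.I • (S i * X i) ^ n) := by
  have hn₂ : 2 * n ≠ 0 := by positivity
  refine wA_pow_le hn₂ (mul_nonneg (by positivity) (Finset.sum_nonneg fun i _ => wA_nonneg A _))
    fun x hx => ?_
  calc ‖innA A ((∑ i ∈ s, S i) x) x‖ ^ (2 * n)
      ≤ (s.card : ℝ) ^ (2 * n - 1) * ∑ i ∈ s, ‖innA A (S i x) x‖ ^ (2 * n) :=
        norm_innA_sum_pow_le A s S x x hn₂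
    _ ≤ (s.card : ℝ) ^ (2 * n - 1) *
          ∑ i ∈ s, wA A ((X i * S i) ^ n + Complex.I • (S i * X i) ^ n) / √2 := by
        gcongr with i hi
        exact (hS i hi).norm_innA_pow_le_wA hA n hx
    _ = _ := by rw [← Finset.sum_div, mul_div_assoc', div_mul_eq_mul_div]

end SemiInner

theorem IsReducedAAdjoint.isAAdjoint {A T X : H →L[ℂ] H} (h : IsReducedAAdjoint A T X) :
    IsAAdjoint A T X := fun x y => by
  have hx : A (X x) = adjoint T (A x) := DFunLike.congr_fun h.1 x
  rw [innA, hx, adjoint_inner_left, innA]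

theorem stmt15 (A : H →L[ℂ] H) (hA : A.IsPositive) (hA0 : A ≠ 0)
    (k : ℕ) (hk : 1 ≤ k) (n : ℕ) (hn : 1 ≤ n)
    (S Ssharp : Fin k → (H →L[ℂ] H))
    (hS : ∀ i, IsReducedAAdjoint A (S i) (Ssharp i)) :
    wA A (∑ i, S i) ^ (2 * n) ≤
      ((k : ℝ) ^ (2 * n - 1) / Real.sqrt 2) *
        ∑ i, wA A ((Ssharp i * S i) ^ n + Complex.I • (S i * Ssharp i) ^ n) := by
  simpa only [Finset.card_univ, Fintype.card_fin] using
    stmt15_general Finset.univ hA hA0 (by omega) S Ssharp fun i _ => (hS i).isAAdjoint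
end
end

section
/- Let S_1, …, S_k be bounded linear operators on a complex Hilbert space H and let n ≥ 1 be an integer. Then ω( Σ_{i=1}^k S_i )^{4n} ≤ (k^{4n−1}/4) · ‖ Σ_{i=1}^k ( |S_i|^{4n} + |S_i^*|^{4n} ) ‖ + (k^{4n−1}/2) · Σ_{i=1}^k ω( |S_i|^{2n} |S_i^*|^{2n} ). -/
noncomputable section

open ContinuousLinearMap

variable {H : Type*} [NormedAddCommGroup H] [InnerProductSpace ℂ H] [CompleteSpace H]

/-- The numerical radius: `ω(T) := sup {|⟨T x, x⟩| : ‖x‖ = 1}`. -/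
def nrad (T : H →L[ℂ] H) : ℝ :=
  sSup {c : ℝ | ∃ x : H, ‖x‖ = 1 ∧ c = ‖(inner ℂ (T x) x : ℂ)‖}

/-- `R` is the absolute value `|X| = (X* X)^{1/2}` of `X`, i.e. the positive square root
of `X* X`. -/
def IsAbsOf (X R : H →L[ℂ] H) : Prop :=
  R.IsPositive ∧ R * R = adjoint X * X

/-!
Let `P = |S|`, `Q = |S*|` and let `x` be a unit vector. The mixed Schwarz inequality
`|⟪S x, x⟫| ^ 2 ≤ ⟪P x, x⟫ ⟪Q x, x⟫` and McCarthy's inequality `⟪P x, x⟫ ^ m ≤ ⟪P ^ m x, x⟫` bound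
`|⟪S x, x⟫| ^ (2 * m)` by `⟪P ^ m x, x⟫ ⟪Q ^ m x, x⟫`. By Buzano's inequality this product is at
most half of `‖P ^ m x‖ ‖Q ^ m x‖ + |⟪P ^ m x, Q ^ m x⟫|`, where the first term is estimated by the
AM-GM inequality and the second is at most `ω(P ^ m Q ^ m)`. Sums of operators are handled by the
power mean inequality.

The mixed Schwarz inequality is the Cauchy-Schwarz inequality for the semi-inner product of the
block operator `[[P, -S*], [-S, Q]]`. This operator is positive because `[[P, 0], [0, Q]]` is the
absolute value of the self-adjoint operator `[[0, S*], [S, 0]]`, hence dominates it.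
-/

section InnerProductSpace

variable {𝕜 E F : Type*} [RCLike 𝕜] [NormedAddCommGroup E] [InnerProductSpace 𝕜 E]
  [NormedAddCommGroup F] [InnerProductSpace 𝕜 F]

/- Buzano's inequality. Reflection in the line through `e` is an isometry, and the sum of `b` and
its reflection is twice the projection of `b` onto that line. -/
theorem norm_inner_mul_norm_inner_le (a b e : E) :
    ‖inner 𝕜 a e‖ * ‖inner 𝕜 e b‖ ≤ ‖e‖ ^ 2 * ((‖a‖ * ‖b‖ + ‖inner 𝕜 a b‖) / 2) := by
  set r := (𝕜 ∙ e).reflection b with hr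
  have hsplit : 2 * (inner 𝕜 a e * inner 𝕜 e b) =
      (‖e‖ ^ 2 : 𝕜) * (inner 𝕜 a r + inner 𝕜 a b) := by
    have hproj := congrArg (inner 𝕜 a) (Submodule.smul_starProjection_singleton 𝕜 (v := e) b)
    simp only [inner_smul_right] at hproj
    rw [hr, Submodule.reflection_apply, inner_sub_right, ← Nat.cast_smul_eq_nsmul 𝕜,
      inner_smul_right]
    push_cast at hproj ⊢
    linear_combination -2 * hproj
  have hbound : ‖inner 𝕜 a r‖ ≤ ‖a‖ * ‖b‖ :=
    (norm_inner_le_norm a r).trans_eq (by rw [hr, LinearIsometryEquiv.norm_map])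
  have hnorm : 2 * (‖inner 𝕜 a e‖ * ‖inner 𝕜 e b‖) =
      ‖e‖ ^ 2 * ‖inner 𝕜 a r + inner 𝕜 a b‖ := by
    simpa using congrArg norm hsplit
  have htri : ‖e‖ ^ 2 * ‖inner 𝕜 a r + inner 𝕜 a b‖ ≤
      ‖e‖ ^ 2 * (‖a‖ * ‖b‖ + ‖inner 𝕜 a b‖) := by
    gcongr
    exact norm_add_le_of_le hbound le_rfl
  linarith

theorem sq_norm_inner_apply_le_of_isPositive {T : E →L[𝕜] E} (hT : T.IsPositive) (x y : E) :
    ‖inner 𝕜 (T x) y‖ ^ 2 ≤ T.reApplyInnerSelf x * T.reApplyInnerSelf y := by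
  let core : PreInnerProductSpace.Core 𝕜 E :=
    { inner := fun u v => inner 𝕜 (T u) v
      conj_inner_symm := fun u v => by
        rw [inner_conj_symm]; exact (hT.inner_left_eq_inner_right u v).symm
      re_inner_nonneg := hT.re_inner_nonneg_left
      add_left := fun u v w => by rw [map_add, inner_add_left]
      smul_left := fun u v c => by rw [map_smul, inner_smul_left] }
  have hsymm : ‖inner 𝕜 (T y) x‖ = ‖inner 𝕜 (T x) y‖ := by
    rw [hT.inner_left_eq_inner_right, norm_inner_symm]
  calc ‖inner 𝕜 (T x) y‖ ^ 2 = ‖inner 𝕜 (T x) y‖ * ‖inner 𝕜 (T y) x‖ := by rw [hsymm, sq]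
    _ ≤ T.reApplyInnerSelf x * T.reApplyInnerSelf y :=
      InnerProductSpace.Core.inner_mul_inner_self_le (c := core) x y

theorem reApplyInnerSelf_mono {S T : E →L[𝕜] E} (h : S ≤ T) (x : E) :
    S.reApplyInnerSelf x ≤ T.reApplyInnerSelf x := by
  simpa [reApplyInnerSelf_apply, inner_sub_left] using
    ((le_def S T).1 h).re_inner_nonneg_left x

theorem reApplyInnerSelf_le_opNorm (T : E →L[𝕜] E) {x : E} (hx : ‖x‖ = 1) :
    T.reApplyInnerSelf x ≤ ‖T‖ := by
  simpa [rayleighQuotient, hx] using (abs_le.1 (T.rayleighQuotient_le_norm x)).2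

theorem inner_pow_apply_left {T : E →L[𝕜] E} (hT : T.IsSymmetric) (m : ℕ) (x y : E) :
    inner 𝕜 ((T ^ m) x) y = inner 𝕜 x ((T ^ m) y) := by
  have hpow := hT.pow m
  rw [← toLinearMap_pow] at hpow
  exact hpow x y

theorem reApplyInnerSelf_pow_two_mul {T : E →L[𝕜] E} (hT : T.IsSymmetric) (m : ℕ) (x : E) :
    (T ^ (2 * m)).reApplyInnerSelf x = ‖(T ^ m) x‖ ^ 2 := by
  rw [reApplyInnerSelf_apply, two_mul, pow_add, mul_def, comp_apply, inner_pow_apply_left hT,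
    inner_self_eq_norm_sq]

/-- The operator on the Hilbert space direct sum of `E` and `F` given by the block matrix
`[[A, B], [C, D]]`. It turns the absolute values of an operator `S : E → F` and of its adjoint
into the absolute value of a single self-adjoint operator. -/
def blockOp (A : E →L[𝕜] E) (B : F →L[𝕜] E) (C : E →L[𝕜] F) (D : F →L[𝕜] F) :
    WithLp 2 (E × F) →L[𝕜] WithLp 2 (E × F) :=
  (WithLp.prodContinuousLinearEquiv 2 𝕜 E F).symm.toContinuousLinearMap ∘L
    ((A.coprod B).prod (C.coprod D)) ∘L
      (WithLp.prodContinuousLinearEquiv 2 𝕜 E F).toContinuousLinearMap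

theorem blockOp_apply (A : E →L[𝕜] E) (B : F →L[𝕜] E) (C : E →L[𝕜] F) (D : F →L[𝕜] F)
    (z : WithLp 2 (E × F)) :
    blockOp A B C D z = WithLp.toLp 2 (A z.fst + B z.snd, C z.fst + D z.snd) :=
  rfl

theorem isPositive_blockOp_diag {P : E →L[𝕜] E} {Q : F →L[𝕜] F} (hP : P.IsPositive)
    (hQ : Q.IsPositive) : (blockOp P 0 0 Q).IsPositive := by
  refine isPositive_def.2 ⟨fun z w => ?_, fun z => ?_⟩
  · simp [blockOp_apply, hP.inner_left_eq_inner_right, hQ.inner_left_eq_inner_right]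
  · simpa [blockOp_apply, reApplyInnerSelf_apply] using
      add_nonneg (hP.re_inner_nonneg_left z.fst) (hQ.re_inner_nonneg_left z.snd)

theorem isSelfAdjoint_blockOp_offDiag [CompleteSpace E] [CompleteSpace F] (S : E →L[𝕜] F) :
    IsSelfAdjoint (blockOp 0 (adjoint S) S 0) := by
  rw [isSelfAdjoint_iff_isSymmetric]
  intro z w
  simp [blockOp_apply, adjoint_inner_left, adjoint_inner_right, add_comm]

theorem blockOp_diag_mul_self [CompleteSpace E] [CompleteSpace F] {S : E →L[𝕜] F}
    {P : E →L[𝕜] E} {Q : F →L[𝕜] F} (hPS : P ∘L P = adjoint S ∘L S)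
    (hQS : Q ∘L Q = S ∘L adjoint S) :
    blockOp P 0 0 Q * blockOp P 0 0 Q =
      blockOp 0 (adjoint S) S 0 * blockOp 0 (adjoint S) S 0 := by
  ext1 z
  have hPz : P (P z.fst) = adjoint S (S z.fst) := DFunLike.congr_fun hPS z.fst
  have hQz : Q (Q z.snd) = S (adjoint S z.snd) := DFunLike.congr_fun hQS z.snd
  simp [blockOp_apply, hPz, hQz]

end InnerProductSpace

section CStarAlgebra

variable {A : Type*} [CStarAlgebra A] [PartialOrder A] [StarOrderedRing A]

theorem le_of_mul_self_eq_mul_self {a b : A} (ha : IsSelfAdjoint a) (hb : 0 ≤ b)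
    (h : b * b = a * a) : a ≤ b := by
  have habs : CFC.abs a = b := CFC.sqrt_unique (by rw [ha.star_eq, h]) hb
  rw [← habs, ← sub_nonneg, CFC.abs_sub_self a ha]
  exact nsmul_nonneg (CFC.negPart_nonneg a) 2

/- Functional calculus applied to the tangent line of `t ↦ t ^ n` at `r`, which lies below the graph
on `[0, ∞)`. -/
theorem algebraMap_pow_add_smul_sub_le_pow {a : A} (ha : 0 ≤ a) {r : ℝ} (hr : 0 ≤ r) (n : ℕ) :
    algebraMap ℝ A (r ^ n) + (n * r ^ (n - 1)) • (a - algebraMap ℝ A r) ≤ a ^ n := by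
  have hsa : IsSelfAdjoint a := .of_nonneg ha
  calc algebraMap ℝ A (r ^ n) + (n * r ^ (n - 1)) • (a - algebraMap ℝ A r)
      = cfc (fun t : ℝ => r ^ n + (n * r ^ (n - 1)) • (t - r)) a := by
        rw [cfc_const_add _ _ a, cfc_smul _ _ a, cfc_sub _ _ a, cfc_id' ℝ a, cfc_const _ a]
    _ ≤ cfc (fun t : ℝ => t ^ n) a := by
        refine cfc_mono fun t ht => ?_
        have ht0 : 0 ≤ t := spectrum_nonneg_of_nonneg ha ht
        simpa using pow_add_mul_le_add_pow hr (b := t - r) (by linarith) n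
    _ = a ^ n := cfc_pow_id a n

end CStarAlgebra

section ComplexInnerProductSpace

variable {E : Type*} [NormedAddCommGroup E] [InnerProductSpace ℂ E]

theorem reApplyInnerSelf_algebraMap_add_smul_sub (T : E →L[ℂ] E) (b c r : ℝ) {x : E}
    (hx : ‖x‖ = 1) :
    (algebraMap ℝ (E →L[ℂ] E) b + c • (T - algebraMap ℝ (E →L[ℂ] E) r)).reApplyInnerSelf x =
      b + c * (T.reApplyInnerSelf x - r) := by
  simp [reApplyInnerSelf_apply, Algebra.algebraMap_eq_smul_one, inner_add_left, inner_sub_left,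
    inner_smul_left_eq_smul, inner_self_eq_norm_sq_to_K, hx]

theorem norm_inner_apply_self_le_nrad (T : E →L[ℂ] E) {x : E} (hx : ‖x‖ = 1) :
    ‖inner ℂ (T x) x‖ ≤ nrad T := by
  refine le_csSup ⟨‖T‖, ?_⟩ ⟨x, hx, rfl⟩
  rintro _ ⟨y, hy, rfl⟩
  calc ‖inner ℂ (T y) y‖ ≤ ‖T y‖ * ‖y‖ := norm_inner_le_norm _ _
    _ ≤ ‖T‖ := by simpa [hy] using T.le_opNorm y

theorem nrad_nonneg (T : E →L[ℂ] E) : 0 ≤ nrad T :=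
  Real.sSup_nonneg (by rintro _ ⟨x, -, rfl⟩; exact norm_nonneg _)

theorem nrad_pow_le {T : E →L[ℂ] E} {m : ℕ} (hm : m ≠ 0) {R : ℝ} (hR : 0 ≤ R)
    (h : ∀ x : E, ‖x‖ = 1 → ‖inner ℂ (T x) x‖ ^ m ≤ R) : nrad T ^ m ≤ R := by
  have hroot : nrad T ≤ R ^ (m⁻¹ : ℝ) := by
    refine Real.sSup_le ?_ (Real.rpow_nonneg hR _)
    rintro _ ⟨x, hx, rfl⟩
    rw [Real.le_rpow_inv_iff_of_pos (norm_nonneg _) hR (by positivity), Real.rpow_natCast]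
    exact h x hx
  rwa [Real.le_rpow_inv_iff_of_pos (nrad_nonneg T) hR (by positivity), Real.rpow_natCast]
    at hroot

end ComplexInnerProductSpace

theorem sq_norm_inner_apply_le_of_comp_self_eq {E F : Type*} [NormedAddCommGroup E]
    [InnerProductSpace ℂ E] [CompleteSpace E] [NormedAddCommGroup F] [InnerProductSpace ℂ F]
    [CompleteSpace F] {S : E →L[ℂ] F} {P : E →L[ℂ] E} {Q : F →L[ℂ] F}
    (hP : P.IsPositive) (hQ : Q.IsPositive) (hPS : P ∘L P = adjoint S ∘L S)
    (hQS : Q ∘L Q = S ∘L adjoint S) (x : E) (y : F) :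
    ‖inner ℂ (S x) y‖ ^ 2 ≤ P.reApplyInnerSelf x * Q.reApplyInnerSelf y := by
  have hle : blockOp 0 (adjoint S) S 0 ≤ blockOp P 0 0 Q :=
    le_of_mul_self_eq_mul_self (isSelfAdjoint_blockOp_offDiag S)
      ((nonneg_iff_isPositive _).2 (isPositive_blockOp_diag hP hQ)) (blockOp_diag_mul_self hPS hQS)
  simpa [blockOp_apply, reApplyInnerSelf_apply] using
    sq_norm_inner_apply_le_of_isPositive ((le_def _ _).1 hle)
      (WithLp.toLp 2 (x, 0)) (WithLp.toLp 2 (0, y))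

theorem pow_reApplyInnerSelf_le {P : H →L[ℂ] H} (hP : P.IsPositive) (m : ℕ) {x : H}
    (hx : ‖x‖ = 1) : P.reApplyInnerSelf x ^ m ≤ (P ^ m).reApplyInnerSelf x := by
  have hr : 0 ≤ P.reApplyInnerSelf x := hP.re_inner_nonneg_left x
  have htangent := algebraMap_pow_add_smul_sub_le_pow ((nonneg_iff_isPositive P).2 hP) hr m
  simpa only [reApplyInnerSelf_algebraMap_add_smul_sub _ _ _ _ hx, sub_self, mul_zero,
    add_zero] using reApplyInnerSelf_mono htangent x

theorem pow_reApplyInnerSelf_mul_pow_reApplyInnerSelf_le {P Q : H →L[ℂ] H} (hP : P.IsPositive)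
    (hQ : Q.IsPositive) (m : ℕ) {x : H} (hx : ‖x‖ = 1) :
    P.reApplyInnerSelf x ^ m * Q.reApplyInnerSelf x ^ m ≤
      (P ^ (2 * m) + Q ^ (2 * m)).reApplyInnerSelf x / 4 + nrad (P ^ m * Q ^ m) / 2 := by
  have hcross : ‖inner ℂ ((P ^ m) x) ((Q ^ m) x)‖ ≤ nrad (P ^ m * Q ^ m) := by
    rw [inner_pow_apply_left hP.isSymmetric, norm_inner_symm]
    exact norm_inner_apply_self_le_nrad (P ^ m * Q ^ m) hx
  have hsplit : (P ^ (2 * m) + Q ^ (2 * m)).reApplyInnerSelf x =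
      ‖(P ^ m) x‖ ^ 2 + ‖(Q ^ m) x‖ ^ 2 := by
    rw [← reApplyInnerSelf_pow_two_mul hP.isSymmetric,
      ← reApplyInnerSelf_pow_two_mul hQ.isSymmetric]
    simp [reApplyInnerSelf_apply, inner_add_left]
  have hQ0 : 0 ≤ Q.reApplyInnerSelf x := hQ.re_inner_nonneg_left x
  calc P.reApplyInnerSelf x ^ m * Q.reApplyInnerSelf x ^ m
      ≤ ‖inner ℂ ((P ^ m) x) x‖ * ‖inner ℂ x ((Q ^ m) x)‖ := by
        rw [norm_inner_symm x]
        gcongr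
        · exact (pow_reApplyInnerSelf_le hP m hx).trans (Complex.re_le_norm _)
        · exact (pow_reApplyInnerSelf_le hQ m hx).trans (Complex.re_le_norm _)
    _ ≤ (‖(P ^ m) x‖ * ‖(Q ^ m) x‖ + ‖inner ℂ ((P ^ m) x) ((Q ^ m) x)‖) / 2 := by
        simpa [hx] using norm_inner_mul_norm_inner_le (𝕜 := ℂ) ((P ^ m) x) ((Q ^ m) x) x
    _ ≤ _ := by
        rw [hsplit]
        linarith [two_mul_le_add_sq ‖(P ^ m) x‖ ‖(Q ^ m) x‖]

theorem norm_inner_apply_self_pow_le_of_isAbsOf {S P Q : H →L[ℂ] H} (hP : IsAbsOf S P)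
    (hQ : IsAbsOf (adjoint S) Q) (m : ℕ) {x : H} (hx : ‖x‖ = 1) :
    ‖inner ℂ (S x) x‖ ^ (2 * m) ≤
      (P ^ (2 * m) + Q ^ (2 * m)).reApplyInnerSelf x / 4 + nrad (P ^ m * Q ^ m) / 2 := by
  have hmixed : ‖inner ℂ (S x) x‖ ^ 2 ≤ P.reApplyInnerSelf x * Q.reApplyInnerSelf x :=
    sq_norm_inner_apply_le_of_comp_self_eq hP.1 hQ.1 hP.2 (by simpa [mul_def] using hQ.2) x x
  calc ‖inner ℂ (S x) x‖ ^ (2 * m)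
      ≤ (P.reApplyInnerSelf x * Q.reApplyInnerSelf x) ^ m := by
        rw [pow_mul]
        gcongr
    _ = P.reApplyInnerSelf x ^ m * Q.reApplyInnerSelf x ^ m := mul_pow _ _ _
    _ ≤ _ := pow_reApplyInnerSelf_mul_pow_reApplyInnerSelf_le hP.1 hQ.1 m hx

theorem stmt17_general {ι : Type*} (s : Finset ι) {m : ℕ} (hm : m ≠ 0)
    {S P Q : ι → (H →L[ℂ] H)} (hP : ∀ i ∈ s, IsAbsOf (S i) (P i))
    (hQ : ∀ i ∈ s, IsAbsOf (adjoint (S i)) (Q i)) :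
    nrad (∑ i ∈ s, S i) ^ (2 * m) ≤
      (s.card : ℝ) ^ (2 * m - 1) / 4 * ‖∑ i ∈ s, (P i ^ (2 * m) + Q i ^ (2 * m))‖ +
        (s.card : ℝ) ^ (2 * m - 1) / 2 * ∑ i ∈ s, nrad (P i ^ m * Q i ^ m) := by
  set T := ∑ i ∈ s, (P i ^ (2 * m) + Q i ^ (2 * m)) with hT
  set ν := ∑ i ∈ s, nrad (P i ^ m * Q i ^ m)
  have hν0 : 0 ≤ ν := Finset.sum_nonneg fun i _ => nrad_nonneg _
  refine nrad_pow_le (by lia) (by positivity) fun x hx => ?_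
  have hsum : ∑ i ∈ s, ‖inner ℂ (S i x) x‖ ^ (2 * m) ≤ T.reApplyInnerSelf x / 4 + ν / 2 := by
    refine (Finset.sum_le_sum fun i hi =>
      norm_inner_apply_self_pow_le_of_isAbsOf (hP i hi) (hQ i hi) m hx).trans_eq ?_
    rw [Finset.sum_add_distrib, ← Finset.sum_div, ← Finset.sum_div, hT, reApplyInnerSelf_apply,
      sum_apply, sum_inner, map_sum]
    rfl
  have hpow : (∑ i ∈ s, ‖inner ℂ (S i x) x‖) ^ (2 * m) ≤
      (s.card : ℝ) ^ (2 * m - 1) * ∑ i ∈ s, ‖inner ℂ (S i x) x‖ ^ (2 * m) := by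
    have h := pow_sum_le_card_mul_sum_pow (s := s) (f := fun i => ‖inner ℂ (S i x) x‖)
      (fun i _ => norm_nonneg _) (2 * m - 1)
    rwa [Nat.sub_add_cancel (by lia)] at h
  calc ‖inner ℂ ((∑ i ∈ s, S i) x) x‖ ^ (2 * m)
      ≤ (∑ i ∈ s, ‖inner ℂ (S i x) x‖) ^ (2 * m) := by
        rw [sum_apply, sum_inner]
        gcongr
        exact norm_sum_le _ _
    _ ≤ (s.card : ℝ) ^ (2 * m - 1) * (‖T‖ / 4 + ν / 2) := by
        grw [hpow, hsum, reApplyInnerSelf_le_opNorm T hx]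
    _ = _ := by ring

theorem stmt17 (k : ℕ) (hk : 1 ≤ k) (n : ℕ) (hn : 1 ≤ n)
    (S absS absSstar : Fin k → (H →L[ℂ] H))
    (habs : ∀ i, IsAbsOf (S i) (absS i))
    (habsStar : ∀ i, IsAbsOf (adjoint (S i)) (absSstar i)) :
    nrad (∑ i, S i) ^ (4 * n) ≤
      ((k : ℝ) ^ (4 * n - 1) / 4) *
          ‖∑ i, ((absS i) ^ (4 * n) + (absSstar i) ^ (4 * n))‖ +
        ((k : ℝ) ^ (4 * n - 1) / 2) *
          ∑ i, nrad ((absS i) ^ (2 * n) * (absSstar i) ^ (2 * n)) := by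
  simpa [← mul_assoc] using stmt17_general Finset.univ (m := 2 * n) (by lia)
    (fun i _ => habs i) (fun i _ => habsStar i)
end
end
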